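/- Assume d₁ ≥ 2, μ₁ = d₁ − 1 and μᵢ = 0 for i = 2,…,r. Let (𝓛, X₁,…,X_r, Y₁,…,Y_r) be a solution of the expanding Ricci soliton ODE system on [s₀, ∞) with X₁(s) > 0, Y₁(s) > 0, X₁(s) ≥ Xᵢ(s) ≥ 0 for i = 2,…,r, and 𝓛(s) ≥ 0 for all s ≥ s₀. Define Z = ((d₁−1)Y₁² + (ε/2)𝓛²)/X₁. If Y₁(s₀)/X₁(s₀) < 1 and 1 − X₁(s₀) − Z(s₀) < 0, then the function s ↦ Y₁(s)/X₁(s) is non-increasing on [s₀, ∞). -/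

import Mathlib

open Filter Topology

/-- `(𝓛, X₁,…,X_r, Y₁,…,Y_r)` solves the expanding Ricci soliton ODE system
`𝓛' = 𝓛(∑ⱼ dⱼXⱼ² − (ε/2)𝓛²)`,
`Xᵢ' = Xᵢ(∑ⱼ dⱼXⱼ² − (ε/2)𝓛² − 1) + μᵢYᵢ² + (ε/2)𝓛²`,
`Yᵢ' = Yᵢ(∑ⱼ dⱼXⱼ² − (ε/2)𝓛² − Xᵢ)` on the set `I`. -/
def IsSolitonSol (r : ℕ) (d : Fin r → ℕ) (μ : Fin r → ℝ) (ε : ℝ)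
    (L : ℝ → ℝ) (X Y : Fin r → ℝ → ℝ) (I : Set ℝ) : Prop :=
  (∀ s ∈ I, HasDerivAt L
      (L s * (∑ j, (d j : ℝ) * X j s ^ 2 - ε / 2 * L s ^ 2)) s) ∧
  (∀ i, ∀ s ∈ I, HasDerivAt (X i)
      (X i s * (∑ j, (d j : ℝ) * X j s ^ 2 - ε / 2 * L s ^ 2 - 1)
        + μ i * Y i s ^ 2 + ε / 2 * L s ^ 2) s) ∧
  (∀ i, ∀ s ∈ I, HasDerivAt (Y i)
      (Y i s * (∑ j, (d j : ℝ) * X j s ^ 2 - ε / 2 * L s ^ 2 - X i s)) s)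

/-!
Write `q = Yᵢ/Xᵢ`, `W = 1 - Xᵢ - Z`, `S = ∑ⱼ dⱼXⱼ²` and `E = (ε/2)𝓛²`. Then `q' = q W` and
`W' = W (S - E + Xᵢ - Z) - (S - Xᵢ² - μᵢYᵢ²)`, and the last bracket is nonnegative as long as
`q ≤ 1`, because `S ≥ dᵢXᵢ²` and `μᵢ ≤ dᵢ - 1`. So `W < 0` makes `q` decrease and
thereby keeps `q < 1`, while `q < 1` keeps `W < 0` by Grönwall's inequality: neither condition can
fail first.
-/

open Set

section Comparison

theorem forall_ge_lt_of_forall_Ico_lt {α β : Type*}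
    [ConditionallyCompleteLinearOrder α] [TopologicalSpace α] [OrderTopology α]
    [LinearOrder β] [TopologicalSpace β] [OrderClosedTopology β]
    {f : α → β} {a : α} {c : β} (hf : ContinuousOn f (Ici a))
    (step : ∀ t ≥ a, (∀ s ∈ Ico a t, f s < c) → f t < c) :
    ∀ t ≥ a, f t < c := by
  by_contra! ⟨b, hab, hb⟩
  have hcompact : IsCompact (Icc a b ∩ f ⁻¹' Ici c) :=
    isCompact_Icc.of_isClosed_subset
      ((hf.mono Icc_subset_Ici_self).preimage_isClosed_of_isClosed isClosed_Icc isClosed_Ici)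
      inter_subset_left
  obtain ⟨t, ⟨⟨hat, htb⟩, ht⟩, hleast⟩ := hcompact.exists_isLeast ⟨b, ⟨hab, le_rfl⟩, hb⟩
  refine (step t hat fun s hs ↦ ?_).not_ge ht
  by_contra! hs'
  exact (hleast ⟨⟨hs.1, hs.2.le.trans htb⟩, hs'⟩).not_gt hs.2

theorem neg_of_deriv_le_mul_of_nonpos {f f' g : ℝ → ℝ} {a b : ℝ} (hab : a ≤ b)
    (hf : ContinuousOn f (Icc a b))
    (hf' : ∀ t ∈ Ico a b, HasDerivWithinAt f (f' t) (Ici t) t)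
    (hg : ContinuousOn g (Icc a b)) (hle : ∀ t ∈ Ico a b, f' t ≤ g t * f t)
    (hnonpos : ∀ t ∈ Ico a b, f t ≤ 0) (ha : f a < 0) : f b < 0 := by
  obtain ⟨K, hK⟩ := isCompact_Icc.bddBelow_image hg
  have hle_const : ∀ t ∈ Ico a b, f' t ≤ K * f t + 0 := fun t ht ↦ by
    rw [add_zero]
    exact (hle t ht).trans <| mul_le_mul_of_nonpos_right
      (hK (mem_image_of_mem g (Ico_subset_Icc_self ht))) (hnonpos t ht)
  calc
    f b ≤ gronwallBound (f a) K 0 (b - a) :=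
      le_gronwallBound_of_liminf_deriv_right_le hf
        (fun t ht _ hr ↦ (hf' t ht).liminf_right_slope_le hr) le_rfl hle_const b
        (right_mem_Icc.mpr hab)
    _ = f a * Real.exp (K * (b - a)) := gronwallBound_ε0 ..
    _ < 0 := mul_neg_of_neg_of_pos ha (Real.exp_pos _)

theorem antitoneOn_of_hasDerivAt_mul_nonpos {D : Set ℝ} (hD : Convex ℝ D) {q W : ℝ → ℝ}
    (hq : ∀ s ∈ D, HasDerivAt q (q s * W s) s) (hq₀ : ∀ s ∈ interior D, 0 ≤ q s)
    (hW : ∀ s ∈ interior D, W s ≤ 0) : AntitoneOn q D :=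
  antitoneOn_of_hasDerivWithinAt_nonpos hD (HasDerivAt.continuousOn hq)
    (fun s hs ↦ (hq s (interior_subset hs)).hasDerivWithinAt)
    fun s hs ↦ mul_nonpos_of_nonneg_of_nonpos (hq₀ s hs) (hW s hs)

theorem antitoneOn_Ici_of_hasDerivAt_mul_of_le_mul {q W W' g : ℝ → ℝ} {s₀ c : ℝ}
    (hq : ∀ s ≥ s₀, HasDerivAt q (q s * W s) s) (hq₀ : ∀ s ≥ s₀, 0 ≤ q s)
    (hW : ∀ s ≥ s₀, HasDerivAt W (W' s) s) (hg : ContinuousOn g (Ici s₀))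
    (hle : ∀ s ≥ s₀, q s < c → W' s ≤ g s * W s)
    (hqc : q s₀ < c) (hW₀ : W s₀ < 0) : AntitoneOn q (Ici s₀) := by
  have hWcont : ContinuousOn W (Ici s₀) := HasDerivAt.continuousOn hW
  have hneg : ∀ t ≥ s₀, W t < 0 := by
    refine forall_ge_lt_of_forall_Ico_lt hWcont fun t ht hlt ↦ ?_
    have hanti : AntitoneOn q (Icc s₀ t) := by
      refine antitoneOn_of_hasDerivAt_mul_nonpos (convex_Icc s₀ t) (fun s hs ↦ hq s hs.1) ?_ ?_ <;>
        rw [interior_Icc]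
      · exact fun s hs ↦ hq₀ s hs.1.le
      · exact fun s hs ↦ (hlt s (Ioo_subset_Ico_self hs)).le
    have hqlt : ∀ s ∈ Ico s₀ t, q s < c := fun s hs ↦
      (hanti (left_mem_Icc.mpr ht) (Ico_subset_Icc_self hs) hs.1).trans_lt hqc
    exact neg_of_deriv_le_mul_of_nonpos ht (hWcont.mono Icc_subset_Ici_self)
      (fun s hs ↦ (hW s hs.1).hasDerivWithinAt) (hg.mono Icc_subset_Ici_self)
      (fun s hs ↦ hle s hs.1 (hqlt s hs)) (fun s hs ↦ (hlt s hs).le) hW₀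
  exact antitoneOn_of_hasDerivAt_mul_nonpos (convex_Ici s₀) hq
    (fun s hs ↦ hq₀ s (interior_subset hs)) fun s hs ↦ (hneg s (interior_subset hs)).le

end Comparison

namespace IsSolitonSol

variable {r : ℕ} (d : Fin r → ℕ) (μ : Fin r → ℝ) (ε : ℝ) (L : ℝ → ℝ) (X Y : Fin r → ℝ → ℝ)

/-- The logarithmic derivative `∑ⱼ dⱼXⱼ² − (ε/2)𝓛²` of `𝓛`, a common term of all equations of the
system. -/
noncomputable def rate (s : ℝ) : ℝ := ∑ j, (d j : ℝ) * X j s ^ 2 - ε / 2 * L s ^ 2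

/-- The quantity `Z = (μᵢYᵢ² + (ε/2)𝓛²)/Xᵢ` attached to the `i`-th factor; it has the junk value
`0` where `Xᵢ = 0`. -/
noncomputable def zQuotient (i : Fin r) (s : ℝ) : ℝ :=
  (μ i * Y i s ^ 2 + ε / 2 * L s ^ 2) / X i s

/-- The quantity `W = 1 − Xᵢ − Z`, which is the logarithmic derivative of `Yᵢ/Xᵢ`
(see `hasDerivAt_div`). -/
noncomputable def ratioRate (i : Fin r) (s : ℝ) : ℝ := 1 - X i s - zQuotient μ ε L X Y i s

variable {d μ ε L X Y} {I : Set ℝ} {i : Fin r} {s : ℝ}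

theorem hasDerivAt_L (h : IsSolitonSol r d μ ε L X Y I) (hs : s ∈ I) :
    HasDerivAt L (L s * rate d ε L X s) s :=
  h.1 s hs

theorem hasDerivAt_Y (h : IsSolitonSol r d μ ε L X Y I) (hs : s ∈ I) :
    HasDerivAt (Y i) (Y i s * (rate d ε L X s - X i s)) s :=
  h.2.2 i s hs

theorem mul_zQuotient (hX : X i s ≠ 0) :
    X i s * zQuotient μ ε L X Y i s = μ i * Y i s ^ 2 + ε / 2 * L s ^ 2 :=
  mul_div_cancel₀ _ hX

theorem hasDerivAt_X (h : IsSolitonSol r d μ ε L X Y I) (hs : s ∈ I) (hX : X i s ≠ 0) :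
    HasDerivAt (X i) (X i s * (rate d ε L X s - 1 + zQuotient μ ε L X Y i s)) s := by
  refine (h.2.1 i s hs).congr_deriv ?_
  rw [mul_add, mul_zQuotient hX, rate]
  ring

theorem hasDerivAt_div (h : IsSolitonSol r d μ ε L X Y I) (hs : s ∈ I) (hX : X i s ≠ 0) :
    HasDerivAt (fun t ↦ Y i t / X i t) (Y i s / X i s * ratioRate μ ε L X Y i s) s := by
  refine ((h.hasDerivAt_Y hs).fun_div (h.hasDerivAt_X hs hX) hX).congr_deriv ?_
  rw [ratioRate]
  field_simp
  ring

theorem hasDerivAt_zQuotient (h : IsSolitonSol r d μ ε L X Y I) (hs : s ∈ I) (hX : X i s ≠ 0) :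
    HasDerivAt (zQuotient μ ε L X Y i)
      (zQuotient μ ε L X Y i s * (rate d ε L X s + 1 - zQuotient μ ε L X Y i s)
        - 2 * μ i * Y i s ^ 2) s := by
  have hnum : HasDerivAt (fun t ↦ μ i * Y i t ^ 2 + ε / 2 * L t ^ 2)
      (X i s * (2 * rate d ε L X s * zQuotient μ ε L X Y i s - 2 * μ i * Y i s ^ 2)) s := by
    refine (((h.hasDerivAt_Y hs).fun_pow 2).const_mul (μ i)).fun_add
      (((h.hasDerivAt_L hs).fun_pow 2).const_mul (ε / 2)) |>.congr_deriv ?_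
    linear_combination (-2 * rate d ε L X s) * mul_zQuotient (μ := μ) (ε := ε) (L := L) (Y := Y) hX
  refine (hnum.fun_div (h.hasDerivAt_X hs hX) hX).congr_deriv ?_
  rw [← mul_zQuotient hX]
  field_simp
  ring

theorem hasDerivAt_ratioRate (h : IsSolitonSol r d μ ε L X Y I) (hs : s ∈ I) (hX : X i s ≠ 0) :
    HasDerivAt (ratioRate μ ε L X Y i)
      ((rate d ε L X s + X i s - zQuotient μ ε L X Y i s) * ratioRate μ ε L X Y i s
        - (∑ j, (d j : ℝ) * X j s ^ 2 - X i s ^ 2 - μ i * Y i s ^ 2)) s := by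
  refine ((h.hasDerivAt_X hs hX).const_sub 1).fun_sub (h.hasDerivAt_zQuotient hs hX)
    |>.congr_deriv ?_
  have hrate : rate d ε L X s = ∑ j, (d j : ℝ) * X j s ^ 2 - ε / 2 * L s ^ 2 := rfl
  rw [ratioRate]
  linear_combination -mul_zQuotient (μ := μ) (ε := ε) (L := L) (Y := Y) hX - hrate

theorem continuousOn_rate (h : IsSolitonSol r d μ ε L X Y I) :
    ContinuousOn (rate d ε L X) I := by
  have hL : ContinuousOn L I := HasDerivAt.continuousOn h.1
  have hX : ∀ j, ContinuousOn (X j) I := fun j ↦ HasDerivAt.continuousOn (h.2.1 j)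
  unfold rate
  fun_prop

end IsSolitonSol

theorem sq_add_mul_sq_le_sum_mul_sq {ι : Type*} [Fintype ι] {d x : ι → ℝ} {i : ι} {μ y : ℝ}
    (hd : ∀ j, 0 ≤ d j) (hdi : 1 ≤ d i) (hμ : μ ≤ d i - 1) (hy : 0 ≤ y) (hyx : y ≤ x i) :
    x i ^ 2 + μ * y ^ 2 ≤ ∑ j, d j * x j ^ 2 :=
  calc
    x i ^ 2 + μ * y ^ 2 ≤ x i ^ 2 + (d i - 1) * x i ^ 2 := by
      have := sub_nonneg.mpr hdi
      gcongr
    _ = d i * x i ^ 2 := by ring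
    _ ≤ ∑ j, d j * x j ^ 2 :=
      Finset.single_le_sum (f := fun j ↦ d j * x j ^ 2)
        (fun j _ ↦ mul_nonneg (hd j) (sq_nonneg _)) (Finset.mem_univ i)

open IsSolitonSol in
theorem stmt_12_general {r : ℕ} {d : Fin r → ℕ} {μ : Fin r → ℝ} {ε s₀ : ℝ} {L : ℝ → ℝ}
    {X Y : Fin r → ℝ → ℝ} {i : Fin r} (hsol : IsSolitonSol r d μ ε L X Y (Ici s₀))
    (hd : 0 < d i) (hμ : μ i ≤ d i - 1) (hX : ∀ s ≥ s₀, 0 < X i s) (hY : ∀ s ≥ s₀, 0 ≤ Y i s)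
    (h₀ : Y i s₀ / X i s₀ < 1) (hW₀ : 1 - X i s₀ - zQuotient μ ε L X Y i s₀ < 0) :
    AntitoneOn (fun s ↦ Y i s / X i s) (Ici s₀) := by
  have hXcont : ContinuousOn (X i) (Ici s₀) := HasDerivAt.continuousOn (hsol.2.1 i)
  have hZcont : ContinuousOn (zQuotient μ ε L X Y i) (Ici s₀) :=
    HasDerivAt.continuousOn fun s hs ↦ hsol.hasDerivAt_zQuotient hs (hX s hs).ne'
  refine antitoneOn_Ici_of_hasDerivAt_mul_of_le_mul
    (fun s hs ↦ hsol.hasDerivAt_div hs (hX s hs).ne')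
    (fun s hs ↦ div_nonneg (hY s hs) (hX s hs).le)
    (fun s hs ↦ hsol.hasDerivAt_ratioRate hs (hX s hs).ne')
    ((hsol.continuousOn_rate.add hXcont).sub hZcont) (fun s hs hlt ↦ ?_) h₀ hW₀
  have hsum := sq_add_mul_sq_le_sum_mul_sq (x := fun j ↦ X j s) (fun j ↦ (d j).cast_nonneg)
    (Nat.one_le_cast.mpr hd) hμ (hY s hs) ((div_lt_one (hX s hs)).mp hlt).le
  refine sub_le_self _ ?_
  linarith

/-- Proposition 7.4 (b): with `μ₁ = d₁ − 1`, `μᵢ = 0` for `i ≥ 2`, if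
`Y₁/X₁ < 1` and `1 − X₁ − Z < 0` at `s₀`, then `Y₁/X₁` is non-increasing on
`[s₀, ∞)`.  Here the index `0 : Fin r` plays the role of `1`. -/
theorem stmt_12 (r : ℕ) (hr : 1 ≤ r) (d : Fin r → ℕ) (hd : ∀ i, 0 < d i)
    (hd₁ : 2 ≤ d ⟨0, by omega⟩) (n : ℕ) (hn : n = ∑ i, d i)
    (μ : Fin r → ℝ) (hμ₁ : μ ⟨0, by omega⟩ = (d ⟨0, by omega⟩ : ℝ) - 1)
    (hμ : ∀ i : Fin r, i ≠ ⟨0, by omega⟩ → μ i = 0)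
    (ε : ℝ) (hε : 0 < ε) (s₀ : ℝ) (L : ℝ → ℝ) (X Y : Fin r → ℝ → ℝ)
    (hsol : IsSolitonSol r d μ ε L X Y (Set.Ici s₀))
    (hpos : ∀ s ≥ s₀, 0 < X ⟨0, by omega⟩ s ∧ 0 < Y ⟨0, by omega⟩ s)
    (hord : ∀ s ≥ s₀, ∀ i : Fin r, i ≠ ⟨0, by omega⟩ →
      0 ≤ X i s ∧ X i s ≤ X ⟨0, by omega⟩ s)
    (hL : ∀ s ≥ s₀, 0 ≤ L s)
    (Z : ℝ → ℝ)
    (hZ : ∀ s, Z s = (((d ⟨0, by omega⟩ : ℝ) - 1) * Y ⟨0, by omega⟩ s ^ 2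
        + ε / 2 * L s ^ 2) / X ⟨0, by omega⟩ s)
    (h₀ : Y ⟨0, by omega⟩ s₀ / X ⟨0, by omega⟩ s₀ < 1)
    (h₀' : 1 - X ⟨0, by omega⟩ s₀ - Z s₀ < 0) :
    AntitoneOn (fun s => Y ⟨0, by omega⟩ s / X ⟨0, by omega⟩ s) (Set.Ici s₀) := by
  refine stmt_12_general hsol (hd _) hμ₁.le (fun s hs ↦ (hpos s hs).1)
    (fun s hs ↦ (hpos s hs).2.le) h₀ ?_
  rwa [IsSolitonSol.zQuotient, hμ₁, ← hZ]
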